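/- For every ℓ ∈ ℕ and Δ ∈ {≤, =}, the family of languages generated by CD grammar systems with arbitrarily many context-free components all working in the (t∧Δℓ)-mode is independent of ℓ and characterizes the programmed languages of finite index with appearance checking: L(CD_∞, CF[−λ], (t∧Δℓ)) = L(CD_∞, CF[−λ], (t∧Δ1)) = ⋃_{k∈ℕ} L(CD_∞, CF[−λ], (t∧Δk)) = L_fin(P, CF[−λ], ac), both with and without erasing rules. -/

import Mathlib

namespace CDHybrid

/-- Symbols: nonterminals are natural numbers, terminals come from `T`. -/
abbrev Symb (T : Type) := ℕ ⊕ T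

/-- Sentential forms. -/
abbrev SForm (T : Type) := List (Symb T)

/-- A context-free rule `A → z`. -/
abbrev Rule (T : Type) := ℕ × SForm T

/-- Number of nonterminal occurrences in a sentential form. -/
def ntCount {T : Type} (x : SForm T) : ℕ := (x.filter Sum.isLeft).length

/-- One rewriting step using some rule of the rule set `P`. -/
def RStep {T : Type} (P : List (Rule T)) (x y : SForm T) : Prop :=
  ∃ r ∈ P, ∃ u v : SForm T, x = u ++ Sum.inl r.1 :: v ∧ y = u ++ r.2 ++ v

/-- `m`-step derivation using only rules of `P`. -/
def StepsN {T : Type} (P : List (Rule T)) : ℕ → SForm T → SForm T → Prop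
  | 0, x, y => x = y
  | m + 1, x, y => ∃ z, RStep P x z ∧ StepsN P m z y

/-- `m`-step derivation using only rules of `P`, all intermediate (and the final)
sentential forms having at most `b` occurrences of nonterminals. -/
def StepsNB {T : Type} (P : List (Rule T)) (b : ℕ) : ℕ → SForm T → SForm T → Prop
  | 0, x, y => x = y
  | m + 1, x, y => ∃ z, RStep P x z ∧ ntCount z ≤ b ∧ StepsNB P b m z y

/-- Derivation modes of CD grammar systems. -/
inductive Mode where
  | eq : ℕ → Mode
  | le : ℕ → Mode
  | ge : ℕ → Mode
  | star : Mode
  | t : Mode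
  | conj : Mode → Mode → Mode

/-- The predicate of a derivation mode: `modeOK P f m y` holds if an `m`-step
derivation by the component `P` ending in `y` is acceptable for mode `f`. -/
def modeOK {T : Type} (P : List (Rule T)) : Mode → ℕ → SForm T → Prop
  | .eq k, m, _ => m = k
  | .le k, m, _ => m ≤ k
  | .ge k, m, _ => k ≤ m
  | .star, _, _ => True
  | .t, _, y => ¬ ∃ z, RStep P y z
  | .conj f g, m, y => modeOK P f m y ∧ modeOK P g m y

/-- A CD grammar system with context-free components. -/
structure CDGS (T : Type) where
  deg : ℕ
  start : ℕ
  comp : Fin deg → List (Rule T)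

/-- λ-freeness: no erasing rules. -/
def CDGS.LamFree {T : Type} (G : CDGS T) : Prop :=
  ∀ i : Fin G.deg, ∀ r ∈ G.comp i, r.2 ≠ []

/-- One derivation step of a component of `G` in mode `f`. -/
def CDGS.ModeStep {T : Type} (G : CDGS T) (f : Mode) (x y : SForm T) : Prop :=
  ∃ i : Fin G.deg, ∃ m : ℕ, StepsN (G.comp i) m x y ∧ modeOK (G.comp i) f m y

/-- One derivation step of a component of `G` in mode `f`, with all produced
sentential forms having at most `b` nonterminal occurrences. -/
def CDGS.ModeStepB {T : Type} (G : CDGS T) (f : Mode) (b : ℕ) (x y : SForm T) : Prop :=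
  ∃ i : Fin G.deg, ∃ m : ℕ, StepsNB (G.comp i) b m x y ∧ modeOK (G.comp i) f m y

/-- The language generated by `G` in mode `f`. -/
def CDGS.lang {T : Type} (G : CDGS T) (f : Mode) : Set (List T) :=
  { w | Relation.TransGen (G.ModeStep f) [Sum.inl G.start] (w.map Sum.inr) }

/-- The words of the language of `G` in mode `f` possessing a derivation of index
at most `b`, i.e., all sentential forms occurring in it have at most `b`
nonterminal occurrences. -/
def CDGS.langB {T : Type} (G : CDGS T) (f : Mode) (b : ℕ) : Set (List T) :=
  { w | ntCount ([Sum.inl G.start] : SForm T) ≤ b ∧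
      Relation.TransGen (G.ModeStepB f b) [Sum.inl G.start] (w.map Sum.inr) }

/-- Two languages are considered equal iff they differ at most in the empty word. -/
def EqL {T : Type} (L₁ L₂ : Set (List T)) : Prop := L₁ \ {[]} = L₂ \ {[]}

/-- The family `L(CD_n, CF[−λ], f)`; `lf = true` forbids erasing rules. -/
def CDFam (T : Type) (lf : Bool) (n : ℕ) (f : Mode) : Set (Set (List T)) :=
  { L | ∃ G : CDGS T, G.deg ≤ n ∧ (lf = true → G.LamFree) ∧ EqL (G.lang f) L }

/-- The family `L(CD_∞, CF[−λ], f)`. -/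
def CDFamInf (T : Type) (lf : Bool) (f : Mode) : Set (Set (List T)) :=
  { L | ∃ G : CDGS T, (lf = true → G.LamFree) ∧ EqL (G.lang f) L }

/-- The family `L_m(CD_n, CF[−λ], f)` of such languages of index at most `m`. -/
def CDFamInd (T : Type) (lf : Bool) (n : ℕ) (f : Mode) (m : ℕ) : Set (Set (List T)) :=
  { L | ∃ G : CDGS T, G.deg ≤ n ∧ (lf = true → G.LamFree) ∧ EqL (G.lang f) L ∧
      G.lang f ⊆ G.langB f m }

/-- The family `L_m(CD_∞, CF[−λ], f)`. -/
def CDFamIndInf (T : Type) (lf : Bool) (f : Mode) (m : ℕ) : Set (Set (List T)) :=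
  { L | ∃ G : CDGS T, (lf = true → G.LamFree) ∧ EqL (G.lang f) L ∧ G.lang f ⊆ G.langB f m }

/-- The family `L_fin(CD_∞, CF[−λ], f)`. -/
def CDFamFinInf (T : Type) (lf : Bool) (f : Mode) : Set (Set (List T)) :=
  { L | ∃ m : ℕ, 1 ≤ m ∧ L ∈ CDFamIndInf T lf f m }

/-- A context-free grammar. -/
structure CFG (T : Type) where
  start : ℕ
  rules : List (Rule T)

/-- The language generated by a context-free grammar. -/
def CFG.lang {T : Type} (G : CFG T) : Set (List T) :=
  { w | Relation.ReflTransGen (RStep G.rules) [Sum.inl G.start] (w.map Sum.inr) }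

/-- The words of `G.lang` having a derivation of index at most `m`. -/
def CFG.langB {T : Type} (G : CFG T) (m : ℕ) : Set (List T) :=
  { w | ntCount ([Sum.inl G.start] : SForm T) ≤ m ∧
      Relation.ReflTransGen (fun x y => RStep G.rules x y ∧ ntCount y ≤ m)
        [Sum.inl G.start] (w.map Sum.inr) }

/-- The family `L(CF)` of context-free languages. -/
def CFFam (T : Type) : Set (Set (List T)) := { L | ∃ G : CFG T, EqL G.lang L }

/-- The family `L_m(CF)` of context-free languages of index at most `m`. -/
def CFFamInd (T : Type) (m : ℕ) : Set (Set (List T)) :=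
  { L | ∃ G : CFG T, EqL G.lang L ∧ G.lang ⊆ G.langB m }

/-- The family `L_fin(CF)` of context-free languages of finite index. -/
def CFFamFin (T : Type) : Set (Set (List T)) :=
  { L | ∃ m : ℕ, 1 ≤ m ∧ L ∈ CFFamInd T m }

/-- A grammar is linear if every right-hand side contains at most one nonterminal. -/
def CFG.Linear {T : Type} (G : CFG T) : Prop := ∀ r ∈ G.rules, ntCount r.2 ≤ 1

/-- The family `L(LIN)` of linear context-free languages. -/
def LinFam (T : Type) : Set (Set (List T)) :=
  { L | ∃ G : CFG T, G.Linear ∧ EqL G.lang L }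

/-- The family `L(FIN)` of finite languages. -/
def FinFam (T : Type) : Set (Set (List T)) := { L | L.Finite }

/-- A programmed grammar with context-free rules. -/
structure PG (T : Type) where
  start : ℕ
  nLab : ℕ
  rule : Fin nLab → Rule T
  succ : Fin nLab → Set (Fin nLab)
  fail : Fin nLab → Set (Fin nLab)

def PG.LamFree {T : Type} (G : PG T) : Prop := ∀ r : Fin G.nLab, (G.rule r).2 ≠ []

/-- No appearance checking: all failure fields are empty. -/
def PG.NoAC {T : Type} (G : PG T) : Prop := ∀ r : Fin G.nLab, G.fail r = ∅

/-- One step of a programmed grammar on pairs (sentential form, label). -/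
def PG.PStep {T : Type} (G : PG T) (p q : SForm T × Fin G.nLab) : Prop :=
  (∃ u v : SForm T, p.1 = u ++ Sum.inl (G.rule p.2).1 :: v ∧
      q.1 = u ++ (G.rule p.2).2 ++ v ∧ q.2 ∈ G.succ p.2) ∨
  (Sum.inl (G.rule p.2).1 ∉ p.1 ∧ q.1 = p.1 ∧ q.2 ∈ G.fail p.2)

/-- The language generated by a programmed grammar. -/
def PG.lang {T : Type} (G : PG T) : Set (List T) :=
  { w | ∃ r₁ r₂ : Fin G.nLab,
      Relation.ReflTransGen G.PStep ([Sum.inl G.start], r₁) (w.map Sum.inr, r₂) }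

/-- The words of `G.lang` having a derivation of index at most `m`. -/
def PG.langB {T : Type} (G : PG T) (m : ℕ) : Set (List T) :=
  { w | ∃ r₁ r₂ : Fin G.nLab, ntCount ([Sum.inl G.start] : SForm T) ≤ m ∧
      Relation.ReflTransGen (fun p q => G.PStep p q ∧ ntCount q.1 ≤ m)
        ([Sum.inl G.start], r₁) (w.map Sum.inr, r₂) }

/-- The family `L_m(P, CF[−λ][, ac])`: programmed languages of index at most `m`;
`ac = false` forbids appearance checking, `lf = true` forbids erasing rules. -/
def PFamInd (T : Type) (lf ac : Bool) (m : ℕ) : Set (Set (List T)) :=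
  { L | ∃ G : PG T, (lf = true → G.LamFree) ∧ (ac = false → G.NoAC) ∧
      EqL G.lang L ∧ G.lang ⊆ G.langB m }

/-- The family `L_fin(P, CF[−λ][, ac])` of programmed languages of finite index. -/
def PFamFin (T : Type) (lf ac : Bool) : Set (Set (List T)) :=
  { L | ∃ m : ℕ, 1 ≤ m ∧ L ∈ PFamInd T lf ac m }
/-!
Both kinds of devices are matched with context-free grammars having a finite control whose state
determines the multiset of nonterminals of the sentential form.

In a CD grammar system working in `(t ∧ Δ k)`-mode every component makes at most `k` steps and
finally eliminates all its left-hand sides. Hence the nonterminals of a form from which a terminal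
word can still be derived are bounded, with multiplicity, by `k` times the set of all left-hand
sides, and the control can store them. For a programmed grammar of index `m` the control stores the
label; numbering the copies of every nonterminal by `1, …, m` moreover makes all nonterminals of a
form distinct.

A finite control is turned into a programmed grammar without effort. Conversely, if the nonterminals
of every form are distinct, then one of them can carry the state as a mark. A component consists of
a single proper rule together with the rules `s → s` for all marked nonterminals `s` it does not
expect. If such an `s` is present, the component never terminates, so it tests the form for unwanted
nonterminals, among them its own left-hand side, and the same rules allow it to spend any positive
number of steps.
-/

/-! ### Sentential forms -/

section Forms

variable {N M T : Type*}

/-- The multiset of nonterminal occurrences of a sentential form. -/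
def nts (x : List (N ⊕ T)) : Multiset N := ↑(x.filterMap Sum.getLeft?)

@[simp] lemma nts_nil : nts ([] : List (N ⊕ T)) = 0 := rfl

@[simp] lemma nts_cons_inl (A : N) (x : List (N ⊕ T)) : nts (Sum.inl A :: x) = A ::ₘ nts x := rfl

@[simp] lemma nts_cons_inr (a : T) (x : List (N ⊕ T)) : nts (Sum.inr a :: x) = nts x := rfl

@[simp] lemma nts_append (x y : List (N ⊕ T)) : nts (x ++ y) = nts x + nts y := by
  simp only [nts, List.filterMap_append, Multiset.coe_add]

@[simp] lemma nts_map_inr (w : List T) : nts (w.map Sum.inr : List (N ⊕ T)) = 0 := by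
  induction w with
  | nil => rfl
  | cons _ _ ih => exact ih

lemma mem_nts {A : N} {x : List (N ⊕ T)} : A ∈ nts x ↔ Sum.inl A ∈ x := by
  simp [nts, Sum.getLeft?_eq_some_iff]

lemma card_nts {T : Type} (x : SForm T) : (nts x).card = ntCount x := by
  induction x with
  | nil => rfl
  | cons s x ih =>
    rw [ntCount] at ih
    cases s <;> simp [ntCount, List.filter_cons, ih]

/-- Renaming of nonterminals in a sentential form. -/
def relabel (φ : N → M) (x : List (N ⊕ T)) : List (M ⊕ T) := x.map (Sum.map φ id)

@[simp] lemma relabel_append (φ : N → M) (x y : List (N ⊕ T)) :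
    relabel φ (x ++ y) = relabel φ x ++ relabel φ y := List.map_append

@[simp] lemma relabel_cons_inl (φ : N → M) (A : N) (x : List (N ⊕ T)) :
    relabel φ (Sum.inl A :: x) = Sum.inl (φ A) :: relabel φ x := rfl

@[simp] lemma relabel_cons_inr (φ : N → M) (a : T) (x : List (N ⊕ T)) :
    relabel φ (Sum.inr a :: x) = Sum.inr a :: relabel φ x := rfl

@[simp] lemma relabel_nil (φ : N → M) : relabel φ ([] : List (N ⊕ T)) = [] := rfl

@[simp] lemma relabel_map_inr (φ : N → M) (w : List T) :
    relabel φ (w.map Sum.inr) = w.map Sum.inr := by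
  simp [relabel]

@[simp] lemma nts_relabel (φ : N → M) (x : List (N ⊕ T)) : nts (relabel φ x) = (nts x).map φ := by
  induction x with
  | nil => rfl
  | cons s x ih => cases s <;> simp [ih]

@[simp] lemma relabel_eq_nil {φ : N → M} {x : List (N ⊕ T)} : relabel φ x = [] ↔ x = [] :=
  List.map_eq_nil_iff

lemma relabel_congr {φ ψ : N → M} {x : List (N ⊕ T)} (h : ∀ A ∈ nts x, φ A = ψ A) :
    relabel φ x = relabel ψ x :=
  List.map_congr_left fun s hs => by
    cases s with
    | inl A => simp [h A (mem_nts.2 hs)]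
    | inr a => rfl

lemma exists_eq_map_inr {x : List (N ⊕ T)} (h : nts x = 0) : ∃ w : List T, x = w.map Sum.inr := by
  induction x with
  | nil => exact ⟨[], rfl⟩
  | cons s x ih =>
    cases s with
    | inl A => simp at h
    | inr a =>
      obtain ⟨w, rfl⟩ := ih h
      exact ⟨a :: w, rfl⟩

lemma relabel_eq_map_inr {φ : N → M} {x : List (N ⊕ T)} {w : List T} :
    relabel φ x = w.map Sum.inr ↔ x = w.map Sum.inr := by
  refine ⟨fun h => ?_, fun h => h ▸ relabel_map_inr φ w⟩
  have hx : nts x = 0 := by simpa using congrArg nts h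
  obtain ⟨v, rfl⟩ := exists_eq_map_inr hx
  rw [relabel_map_inr] at h
  rw [List.map_injective_iff.2 Sum.inr_injective h]

/-- `Rewrites A z x y` says that `y` arises from `x` by replacing one occurrence of `A` by `z`. -/
def Rewrites (A : N) (z x y : List (N ⊕ T)) : Prop :=
  ∃ u v, x = u ++ Sum.inl A :: v ∧ y = u ++ z ++ v

lemma exists_rewrites {A : N} {x : List (N ⊕ T)} (h : A ∈ nts x) (z : List (N ⊕ T)) :
    ∃ y, Rewrites A z x y := by
  obtain ⟨u, v, rfl⟩ := List.append_of_mem (mem_nts.1 h)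
  exact ⟨_, u, v, rfl, rfl⟩

lemma Rewrites.mem {A : N} {x y z : List (N ⊕ T)} (h : Rewrites A z x y) : A ∈ nts x := by
  obtain ⟨u, v, rfl, -⟩ := h
  simp

lemma Rewrites.nts_add {A : N} {x y z : List (N ⊕ T)} (h : Rewrites A z x y) :
    nts y + {A} = nts x + nts z := by
  obtain ⟨u, v, rfl, rfl⟩ := h
  simp only [nts_append, nts_cons_inl, ← Multiset.singleton_add]
  abel

lemma rewrites_singleton {A : N} {x y : List (N ⊕ T)} :
    Rewrites A [Sum.inl A] x y ↔ A ∈ nts x ∧ y = x := by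
  constructor
  · intro h
    refine ⟨h.mem, ?_⟩
    obtain ⟨u, v, rfl, rfl⟩ := h
    simp
  · rintro ⟨h, rfl⟩
    obtain ⟨u, v, rfl⟩ := List.append_of_mem (mem_nts.1 h)
    exact ⟨u, v, rfl, by simp⟩

lemma rewrites_self {A : N} {y z : List (N ⊕ T)} : Rewrites A z [Sum.inl A] y ↔ y = z := by
  constructor
  · rintro ⟨_ | _, v, hx, rfl⟩ <;> simp_all
  · rintro rfl
    exact ⟨[], [], rfl, (List.append_nil y).symm⟩

protected lemma Rewrites.relabel {A : N} {x y z : List (N ⊕ T)} (h : Rewrites A z x y) (φ : N → M) :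
    Rewrites (φ A) (relabel φ z) (relabel φ x) (relabel φ y) := by
  obtain ⟨u, v, rfl, rfl⟩ := h
  exact ⟨relabel φ u, relabel φ v, by simp, by simp⟩

lemma Rewrites.exists_of_relabel {φ : N → M} {a : M} {x : List (N ⊕ T)} {z y : List (M ⊕ T)}
    (h : Rewrites a z (relabel φ x) y) :
    ∃ u A v, x = u ++ Sum.inl A :: v ∧ φ A = a ∧ y = relabel φ u ++ z ++ relabel φ v := by
  obtain ⟨_, _, hx, rfl⟩ := h
  obtain ⟨u, _, rfl, rfl, hv⟩ := List.map_eq_append_iff.1 hx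
  obtain ⟨s, v, rfl, hs, rfl⟩ := List.map_eq_cons_iff.1 hv
  cases s with
  | inl A => exact ⟨u, A, v, rfl, by simpa using hs, rfl⟩
  | inr b => simp at hs

lemma Rewrites.of_relabel {φ : N → M} {a : M} {x : List (N ⊕ T)} {z y : List (M ⊕ T)}
    (h : Rewrites a z (relabel φ x) y) :
    ∃ A ∈ nts x, φ A = a ∧ ∀ z', relabel φ z' = z →
      ∃ y', Rewrites A z' x y' ∧ relabel φ y' = y := by
  obtain ⟨u, A, v, rfl, hA, rfl⟩ := h.exists_of_relabel
  refine ⟨A, by simp, hA, ?_⟩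
  rintro z' rfl
  exact ⟨u ++ z' ++ v, ⟨u, v, rfl, rfl⟩, by simp⟩

lemma Rewrites.notMem {A : N} {x y z : List (N ⊕ T)} (h : Rewrites A z x y) (hx : (nts x).Nodup)
    (hz : A ∉ nts z) : A ∉ nts y := by
  obtain ⟨u, v, rfl, rfl⟩ := h
  simp only [nts_append, nts_cons_inl, Multiset.nodup_add, Multiset.nodup_cons,
    Multiset.disjoint_cons_right] at hx
  simp [hz, hx.2.2.1, hx.2.1.1]

lemma exists_rstep_iff {T : Type} {P : List (Rule T)} {y : SForm T} :
    (∃ z, RStep P y z) ↔ ∃ r ∈ P, r.1 ∈ nts y :=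
  ⟨fun ⟨_, r, hr, h⟩ => ⟨r, hr, Rewrites.mem h⟩,
    fun ⟨r, hr, h⟩ => (exists_rewrites h r.2).imp fun _ hz => ⟨r, hr, hz⟩⟩

lemma not_exists_rstep_iff {T : Type} {P : List (Rule T)} {y : SForm T} :
    (¬∃ z, RStep P y z) ↔ ∀ r ∈ P, r.1 ∉ nts y := by
  rw [exists_rstep_iff]
  push Not
  rfl

end Forms

/-! ### Derivation modes and tracking grammars -/

section Modes

/-- The mode `f` only constrains the number of steps: they have to lie in `D`. -/
def Mode.Counts (f : Mode) (D : Set ℕ) : Prop :=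
  ∀ ⦃T : Type⦄ (P : List (Rule T)) (m : ℕ) (y : SForm T), modeOK P f m y ↔ m ∈ D

/-- The modes that constrain the number of steps to a bounded set containing a positive number;
these include `≤ k` and `= k` for `k ≥ 1`. -/
def Mode.IsBoundedCounting (f : Mode) : Prop :=
  ∃ D : Set ℕ, BddAbove D ∧ (∃ n ∈ D, 1 ≤ n) ∧ f.Counts D

lemma isBoundedCounting_le {k : ℕ} (hk : 1 ≤ k) : (Mode.le k).IsBoundedCounting :=
  ⟨Set.Iic k, bddAbove_Iic, ⟨k, Set.mem_Iic.2 le_rfl, hk⟩, fun _ _ _ _ => Iff.rfl⟩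

lemma isBoundedCounting_eq {k : ℕ} (hk : 1 ≤ k) : (Mode.eq k).IsBoundedCounting :=
  ⟨{k}, bddAbove_singleton, ⟨k, rfl, hk⟩, fun _ _ _ _ => Iff.rfl⟩

lemma modeOK_conj_t_iff {f : Mode} {D : Set ℕ} (hf : f.Counts D) {T : Type} {P : List (Rule T)}
    {m : ℕ} {y : SForm T} :
    modeOK P (.conj .t f) m y ↔ (∀ r ∈ P, r.1 ∉ nts y) ∧ m ∈ D :=
  and_congr not_exists_rstep_iff (hf P m y)

lemma CDGS.lang_eq {T : Type} (C : CDGS T) (f : Mode) :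
    C.lang f =
      {w | Relation.ReflTransGen (C.ModeStep f) [Sum.inl C.start] (w.map Sum.inr)} := by
  ext w
  have hstart : w.map Sum.inr ≠ ([Sum.inl C.start] : SForm T) := fun h => by
    simpa using congrArg nts h
  exact (Relation.reflTransGen_iff_eq_or_transGen.trans (or_iff_right hstart)).symm

end Modes

section Tracking

/-- A transition of a grammar with finite control: in state `src`, replace an occurrence of `lhs`
by `rhs` and move to state `tgt`. -/
structure Transition (N Q T : Type*) where
  src : Q
  lhs : N
  rhs : List (N ⊕ T)
  tgt : Q

/-- A context-free grammar with a finite control whose state determines the multiset `content` of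
nonterminals of the current sentential form. This is the common normal form of CD grammar systems
in `(t ∧ Δ k)`-mode and of programmed grammars of finite index. -/
structure TrackingGrammar (N Q T : Type*) where
  start : N
  init : Q
  content : Q → Multiset N
  trans : Set (Transition N Q T)
  finite_trans : trans.Finite
  content_init : content init = {start}
  balance : ∀ t ∈ trans, content t.tgt + {t.lhs} = content t.src + nts t.rhs

namespace TrackingGrammar

variable {N Q T : Type*} (G : TrackingGrammar N Q T)

/-- One transition, on pairs of a sentential form and a state. -/
def Step (c d : List (N ⊕ T) × Q) : Prop :=
  ∃ t ∈ G.trans, t.src = c.2 ∧ t.tgt = d.2 ∧ Rewrites t.lhs t.rhs c.1 d.1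

/-- Reachability from the start configuration. -/
def Reach (p : List (N ⊕ T) × Q) : Prop :=
  Relation.ReflTransGen G.Step ([Sum.inl G.start], G.init) p

/-- The generated language; every state is accepting. -/
def lang : Set (List T) := {w | ∃ q, G.Reach (w.map Sum.inr, q)}

variable {G}

lemma Step.nts_eq {p p' : List (N ⊕ T) × Q} (h : G.Step p p') (hp : nts p.1 = G.content p.2) :
    nts p'.1 = G.content p'.2 := by
  obtain ⟨t, ht, hsrc, htgt, hr⟩ := h
  have hb := G.balance t ht
  rw [hsrc, htgt, ← hp, ← hr.nts_add] at hb
  exact (add_right_cancel hb).symm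

lemma Reach.nts_eq {p : List (N ⊕ T) × Q} (h : G.Reach p) : nts p.1 = G.content p.2 := by
  induction h with
  | refl => simp [G.content_init]
  | tail _ hs ih => exact hs.nts_eq ih

end TrackingGrammar

lemma finite_transitions {N Q T : Type*} [Finite Q] {R : Set (N × List (N ⊕ T))} (hR : R.Finite) :
    {t : Transition N Q T | (t.lhs, t.rhs) ∈ R}.Finite := by
  refine Set.Finite.of_finite_image (f := fun t => (t.src, (t.lhs, t.rhs), t.tgt)) ?_ ?_
  · refine (Set.finite_univ.prod (hR.prod Set.finite_univ)).subset ?_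
    rintro _ ⟨t, ht, rfl⟩
    exact ⟨trivial, ht, trivial⟩
  · rintro ⟨⟩ - ⟨⟩ - h
    simpa [and_assoc] using h

end Tracking

/-! ### From CD grammar systems to tracking grammars -/

section FromCDGS

variable {T : Type}

lemma StepsN.tail {P : List (Rule T)} {m : ℕ} {x y z : SForm T} (h : StepsN P m x y)
    (hz : RStep P y z) : StepsN P (m + 1) x z := by
  induction m generalizing x with
  | zero => exact ⟨z, h ▸ hz, rfl⟩
  | succ m ih =>
    obtain ⟨x', hx', h⟩ := h
    exact ⟨x', hx', ih h⟩

lemma nts_le_of_stepsN {P : List (Rule T)} {H : Finset ℕ} (hH : ∀ r ∈ P, r.1 ∈ H) {m : ℕ}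
    {x y : SForm T} (h : StepsN P m x y) : nts x ≤ nts y + m • H.val := by
  induction m generalizing x with
  | zero => simp [show x = y from h]
  | succ m ih =>
    obtain ⟨z, ⟨r, hr, hrw⟩, h⟩ := h
    calc nts x ≤ nts x + nts r.2 := Multiset.le_add_right _ _
      _ = nts z + {r.1} := (Rewrites.nts_add hrw).symm
      _ ≤ nts y + m • H.val + H.val :=
        add_le_add (ih h) (Multiset.singleton_le.2 (hH r hr))
      _ = nts y + (m + 1) • H.val := by rw [succ_nsmul, add_assoc]

/-- In `(t ∧ Δ k)`-mode a component erases all its left-hand sides from the sentential form, so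
nonterminals can be counted against those of the next form without any accumulation. -/
lemma nts_le_of_stepsN_of_terminated {P : List (Rule T)} {H : Finset ℕ}
    (hH : ∀ r ∈ P, r.1 ∈ H) {k m : ℕ} (hm : m ≤ k) {x y : SForm T} (h : StepsN P m x y)
    (hterm : ∀ r ∈ P, r.1 ∉ nts y) (hy : nts y ≤ k • H.val) : nts x ≤ k • H.val := by
  let K : Finset ℕ := (P.map Prod.fst).toFinset
  have mem_K {A : ℕ} : A ∈ K ↔ ∃ r ∈ P, r.1 = A := by simp [K]
  have hKH : K ⊆ H := fun A hA => by
    obtain ⟨r, hr, rfl⟩ := mem_K.1 hA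
    exact hH r hr
  have hdisj : Disjoint (nts y) (m • K.val) := Multiset.disjoint_left.2 fun {A} hA hAK => by
    obtain ⟨r, hr, rfl⟩ := mem_K.1 (Multiset.mem_of_mem_nsmul hAK)
    exact hterm r hr hA
  calc nts x ≤ nts y + m • K.val := nts_le_of_stepsN (fun r hr => mem_K.2 ⟨r, hr, rfl⟩) h
    _ = nts y ∪ m • K.val := Multiset.add_eq_union_iff_disjoint.2 hdisj
    _ ≤ k • H.val := Multiset.union_le hy <|
      (nsmul_le_nsmul_right (Finset.val_le_iff.2 hKH) m).trans
        (nsmul_le_nsmul_left (Multiset.zero_le _) hm)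

namespace CDGS

variable (C : CDGS T)

/-- The start symbol together with all left-hand sides. -/
def heads : Finset ℕ :=
  insert C.start (Finset.univ.biUnion fun i => ((C.comp i).map Prod.fst).toFinset)

lemma start_mem_heads : C.start ∈ C.heads := Finset.mem_insert_self _ _

variable {C} in
lemma mem_heads {i : Fin C.deg} {r : Rule T} (hr : r ∈ C.comp i) : r.1 ∈ C.heads :=
  Finset.mem_insert_of_mem <| Finset.mem_biUnion.2
    ⟨i, Finset.mem_univ i, List.mem_toFinset.2 (List.mem_map_of_mem hr)⟩

/-- The control of the tracking grammar of `C`: a phase and the nonterminals of the current form.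
Phase `none` means that no component is active, phase `some (i, j)` that component `i` is active
and has made `j` steps. -/
abbrev Control (k : ℕ) : Type :=
  Option (Fin C.deg × Fin k) × {c : Multiset ℕ // c ≤ k • C.heads.val}

instance (k : ℕ) : Finite (C.Control k) :=
  have : Finite {c : Multiset ℕ // c ≤ k • C.heads.val} := (Set.finite_Iic _).to_subtype
  inferInstance

/-- In the given phase, component `i` can be regarded as having made `j` steps. -/
def AtStep {n k : ℕ} : Option (Fin n × Fin k) → Fin n → ℕ → Prop
  | none, _, j => j = 0
  | some p, i, j => p.1 = i ∧ p.2 = j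

/-- The transitions of the tracking grammar of `C`: a component either continues or stops after
an admissible number of steps, none of its rules being applicable. A component that has just
removed the last nonterminal cannot continue, which keeps terminal forms out of unfinished phases.
-/
def transitions (D : Set ℕ) (k : ℕ) : Set (Transition ℕ (C.Control k) T) :=
  {t | t.tgt.2.1 + {t.lhs} = t.src.2.1 + nts t.rhs ∧
    ∃ i j, AtStep t.src.1 i j ∧ (t.lhs, t.rhs) ∈ C.comp i ∧
      (t.tgt.2.1 ≠ 0 ∧ AtStep t.tgt.1 i (j + 1) ∨
        t.tgt.1 = none ∧ j + 1 ∈ D ∧ ∀ r ∈ C.comp i, r.1 ∉ t.tgt.2.1)}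

/-- The tracking grammar that simulates `C` in a mode that requires termination and a number of
steps in `D`, where `k` bounds `D`. -/
def tracking (D : Set ℕ) {k : ℕ} (hk : 1 ≤ k) : TrackingGrammar ℕ (C.Control k) T where
  start := C.start
  init := (none, ⟨{C.start}, by
    rw [Multiset.singleton_le]
    exact Multiset.mem_nsmul.2 ⟨by lia, C.start_mem_heads⟩⟩)
  content q := q.2
  trans := C.transitions D k
  finite_trans :=
    (finite_transitions (Set.finite_iUnion fun i => (C.comp i).finite_toSet)).subset
      fun _ ⟨_, i, _, _, hr, _⟩ => Set.mem_iUnion.2 ⟨i, hr⟩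
  content_init := rfl
  balance _ ht := ht.1

/-- The form `x` arises from the form `x₀`, at which no component was active, by the steps recorded
in the phase. -/
def InPhase {k : ℕ} (x₀ x : SForm T) : Option (Fin C.deg × Fin k) → Prop
  | none => x₀ = x
  | some p => StepsN (C.comp p.1) p.2 x₀ x

variable {C} {D : Set ℕ} {k : ℕ} {f : Mode}

lemma InPhase.stepsN {x₀ x : SForm T} {o : Option (Fin C.deg × Fin k)} {i : Fin C.deg} {j : ℕ}
    (h : C.InPhase x₀ x o) (ho : AtStep o i j) : StepsN (C.comp i) j x₀ x := by
  cases o with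
  | none =>
    obtain rfl : j = 0 := ho
    exact h
  | some p =>
    obtain ⟨rfl, rfl⟩ := ho
    exact h

lemma inPhase_of_stepsN {x₀ x : SForm T} {o : Option (Fin C.deg × Fin k)} {i : Fin C.deg} {j : ℕ}
    (h : StepsN (C.comp i) (j + 1) x₀ x) (ho : AtStep o i (j + 1)) : C.InPhase x₀ x o := by
  cases o with
  | none => cases ho
  | some p =>
    obtain ⟨rfl, hj⟩ := ho
    rwa [← hj] at h

lemma exists_inPhase_of_reach (hf : f.Counts D) {hk : 1 ≤ k} {p : SForm T × C.Control k}
    (h : (C.tracking D hk).Reach p) :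
    (nts p.1 = 0 → p.2.1 = none) ∧
      ∃ x₀, Relation.ReflTransGen (C.ModeStep (.conj .t f)) [Sum.inl C.start] x₀ ∧
        C.InPhase x₀ p.1 p.2.1 := by
  induction h with
  | refl => exact ⟨fun _ => rfl, _, .refl, rfl⟩
  | @tail p p' hp hs ih =>
    have hcontent : nts p'.1 = p'.2.2 := TrackingGrammar.Reach.nts_eq (.tail hp hs)
    obtain ⟨-, x₀, hx₀, hphase⟩ := ih
    obtain ⟨t, ⟨-, i, j, hj, hr, hcase⟩, hsrc, htgt, hrw⟩ := hs
    rw [hsrc] at hj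
    rw [htgt, ← hcontent] at hcase
    have hsteps : StepsN (C.comp i) (j + 1) x₀ p'.1 := (hphase.stepsN hj).tail ⟨_, hr, hrw⟩
    rcases hcase with ⟨hne, hj'⟩ | ⟨hnone, hjD, hterm⟩
    · exact ⟨fun h0 => (hne h0).elim, x₀, hx₀, inPhase_of_stepsN hsteps hj'⟩
    · refine ⟨fun _ => hnone, p'.1, hx₀.tail ⟨i, j + 1, hsteps, ?_⟩, hnone ▸ rfl⟩
      exact (modeOK_conj_t_iff hf).2 ⟨hterm, hjD⟩

lemma reflTransGen_step_of_stepsN (hD : k ∈ upperBounds D) {hk : 1 ≤ k} {i : Fin C.deg}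
    {x y : SForm T} (hterm : ∀ r ∈ C.comp i, r.1 ∉ nts y) (hy : nts y ≤ k • C.heads.val) {m j : ℕ}
    (h : StepsN (C.comp i) (m + 1) x y) (hm : m + 1 + j ∈ D) {o : Option (Fin C.deg × Fin k)}
    (ho : AtStep o i j) (hx : nts x ≤ k • C.heads.val) :
    Relation.ReflTransGen (C.tracking D hk).Step (x, o, ⟨nts x, hx⟩) (y, none, ⟨nts y, hy⟩) := by
  induction m generalizing j x o with
  | zero =>
    obtain ⟨_, ⟨r, hr, hrw⟩, rfl⟩ := h
    refine .single ⟨⟨_, r.1, r.2, _⟩, ⟨Rewrites.nts_add hrw, i, j, ho, hr, .inr ⟨rfl, ?_, hterm⟩⟩,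
      rfl, rfl, hrw⟩
    rwa [show j + 1 = 0 + 1 + j by lia]
  | succ m ih =>
    have hle := hD hm
    obtain ⟨z, ⟨r, hr, hrw⟩, h⟩ := h
    have hz : nts z ≤ k • C.heads.val :=
      nts_le_of_stepsN_of_terminated (fun _ => mem_heads) (by lia) h hterm hy
    have hz₀ : nts z ≠ 0 := by
      obtain ⟨_, ⟨r', -, hr'⟩, -⟩ := h
      exact ne_of_mem_of_not_mem' (Rewrites.mem hr') (Multiset.notMem_zero _)
    let o' : Option (Fin C.deg × Fin k) := some (i, ⟨j + 1, by lia⟩)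
    have ho' : AtStep o' i (j + 1) := ⟨rfl, rfl⟩
    refine .head (b := (z, o', ⟨nts z, hz⟩)) ⟨⟨_, r.1, r.2, _⟩, ?_, rfl, rfl, hrw⟩ <|
      ih h (by rwa [show m + 1 + (j + 1) = m + 1 + 1 + j by lia]) ho' hz
    exact ⟨Rewrites.nts_add hrw, i, j, ho, hr, .inl ⟨hz₀, ho'⟩⟩

lemma reflTransGen_step_of_modeStep (hf : f.Counts D) (hD : k ∈ upperBounds D) {hk : 1 ≤ k}
    {x y : SForm T} (h : C.ModeStep (.conj .t f) x y) (hy : nts y ≤ k • C.heads.val) :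
    ∃ hx : nts x ≤ k • C.heads.val, Relation.ReflTransGen (C.tracking D hk).Step
      (x, none, ⟨nts x, hx⟩) (y, none, ⟨nts y, hy⟩) := by
  obtain ⟨i, m, hsteps, hok⟩ := h
  obtain ⟨hterm, hm⟩ := (modeOK_conj_t_iff hf).1 hok
  have hx := nts_le_of_stepsN_of_terminated (fun _ => mem_heads) (hD hm) hsteps hterm hy
  refine ⟨hx, ?_⟩
  cases m with
  | zero =>
    obtain rfl : x = y := hsteps
    exact .refl
  | succ m => exact reflTransGen_step_of_stepsN (j := 0) (o := none) hD hterm hy hsteps hm rfl hx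

lemma reflTransGen_step_of_modeSteps (hf : f.Counts D) (hD : k ∈ upperBounds D) {hk : 1 ≤ k}
    {x y : SForm T} (h : Relation.ReflTransGen (C.ModeStep (.conj .t f)) x y)
    (hy : nts y ≤ k • C.heads.val) :
    ∃ hx : nts x ≤ k • C.heads.val, Relation.ReflTransGen (C.tracking D hk).Step
      (x, none, ⟨nts x, hx⟩) (y, none, ⟨nts y, hy⟩) := by
  induction h using Relation.ReflTransGen.head_induction_on with
  | refl => exact ⟨hy, .refl⟩
  | head hs _ ih =>
    obtain ⟨hz, hrun⟩ := ih
    obtain ⟨hx, hrun'⟩ := reflTransGen_step_of_modeStep hf hD hs hz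
    exact ⟨hx, hrun'.trans hrun⟩

lemma lang_tracking (hf : f.Counts D) (hD : k ∈ upperBounds D) (hk : 1 ≤ k) :
    (C.tracking D hk).lang = C.lang (.conj .t f) := by
  ext w
  rw [lang_eq]
  constructor
  · rintro ⟨q, hq⟩
    obtain ⟨hnone, x₀, hx₀, hphase⟩ := exists_inPhase_of_reach hf hq
    rw [hnone (nts_map_inr w)] at hphase
    obtain rfl : x₀ = w.map Sum.inr := hphase
    exact hx₀
  · intro hw
    have hw₀ : nts (w.map Sum.inr : SForm T) ≤ k • C.heads.val := by simp
    obtain ⟨_, hrun⟩ := reflTransGen_step_of_modeSteps (hk := hk) hf hD hw hw₀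
    exact ⟨(none, ⟨_, hw₀⟩), hrun⟩

lemma rhs_ne_nil_of_mem_tracking (hC : C.LamFree) (hk : 1 ≤ k) :
    ∀ t ∈ (C.tracking D hk).trans, t.rhs ≠ [] := by
  rintro t ⟨-, i, -, -, hr, -⟩
  exact hC i _ hr

end CDGS

end FromCDGS

/-! ### From tracking grammars to programmed grammars -/

section ToPG

variable {T : Type}

lemma PG.langB_subset_lang (P : PG T) (m : ℕ) : P.langB m ⊆ P.lang :=
  fun _ ⟨r₁, r₂, _, h⟩ => ⟨r₁, r₂, Relation.ReflTransGen.mono (fun _ _ hs => hs.1) _ _ h⟩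

namespace TrackingGrammar

variable {Q : Type*} (G : TrackingGrammar ℕ Q T)

/-- The rule carried by a label of the programmed grammar of `G`: the label `none` introduces the
start symbol of `G`, the other labels are the transitions. -/
def labelRule (S : ℕ) : Option G.trans → Rule T
  | none => (S, [Sum.inl G.start])
  | some t => (t.1.lhs, t.1.rhs)

/-- The state of `G` after the rule of a label has been applied. -/
def labelState : Option G.trans → Q
  | none => G.init
  | some t => t.1.tgt

/-- The label `a` may be active in state `q`. -/
def Enables (q : Q) (a : Option G.trans) : Prop := ∀ t ∈ a, t.1.src = q

/-- The programmed grammar of `G` with start symbol `S`, its labels being numbered by `e`. -/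
def toPG (S : ℕ) {n : ℕ} (e : Option G.trans ≃ Fin n) : PG T where
  start := S
  nLab := n
  rule i := G.labelRule S (e.symm i)
  succ i := {j | G.Enables (G.labelState (e.symm i)) (e.symm j)}
  fail _ := ∅

variable {G} {S n : ℕ} {e : Option G.trans ≃ Fin n}

lemma pstep_toPG_iff {p p' : SForm T × Fin n} :
    (G.toPG S e).PStep p p' ↔
      Rewrites (G.labelRule S (e.symm p.2)).1 (G.labelRule S (e.symm p.2)).2 p.1 p'.1 ∧
        G.Enables (G.labelState (e.symm p.2)) (e.symm p'.2) := by
  constructor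
  · rintro (⟨u, v, hx, hx', hsucc⟩ | ⟨-, -, ⟨⟩⟩)
    exact ⟨⟨u, v, hx, hx'⟩, hsucc⟩
  · rintro ⟨⟨u, v, hx, hx'⟩, hsucc⟩
    exact .inl ⟨u, v, hx, hx', hsucc⟩

lemma reach_labelState (hlhs : ∀ t ∈ G.trans, t.lhs ≠ S) (hcontent : ∀ q, S ∉ G.content q)
    {a : Option G.trans} {x y : SForm T}
    (hrw : Rewrites (G.labelRule S a).1 (G.labelRule S a).2 x y)
    (h : x = [Sum.inl S] ∨ ∃ q, G.Reach (x, q) ∧ G.Enables q a) :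
    G.Reach (y, G.labelState a) := by
  cases a with
  | none =>
    rcases h with rfl | ⟨q, hq, -⟩
    · obtain rfl := rewrites_self.1 hrw
      exact .refl
    · exact (hcontent q (hq.nts_eq ▸ hrw.mem)).elim
  | some t =>
    rcases h with rfl | ⟨q, hq, ha⟩
    · exact (hlhs t.1 t.2 (Multiset.mem_singleton.1 hrw.mem)).elim
    · exact .tail hq ⟨t.1, t.2, ha t rfl, rfl, hrw⟩

lemma exists_reach_of_toPG (hlhs : ∀ t ∈ G.trans, t.lhs ≠ S) (hcontent : ∀ q, S ∉ G.content q)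
    {i : Fin n} {p : SForm T × Fin n}
    (h : Relation.ReflTransGen (G.toPG S e).PStep ([Sum.inl S], i) p) :
    p.1 = [Sum.inl S] ∨ ∃ q, G.Reach (p.1, q) ∧ G.Enables q (e.symm p.2) := by
  induction h with
  | refl => exact .inl rfl
  | tail _ hs ih =>
    obtain ⟨hrw, hen⟩ := pstep_toPG_iff.1 hs
    exact .inr ⟨_, reach_labelState hlhs hcontent hrw ih, hen⟩

lemma Reach.reflTransGen_toPG {m : ℕ} (hm : 1 ≤ m) (hcard : ∀ q, (G.content q).card ≤ m)
    {p : SForm T × Q} (h : G.Reach p) {a : Option G.trans} (ha : G.Enables p.2 a) :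
    Relation.ReflTransGen (fun p q => (G.toPG S e).PStep p q ∧ ntCount q.1 ≤ m)
      ([Sum.inl S], e none) (p.1, e a) := by
  induction h generalizing a with
  | refl =>
    refine .single ⟨pstep_toPG_iff.2 ?_, hm⟩
    simp only [Equiv.symm_apply_apply]
    exact ⟨rewrites_self.2 rfl, ha⟩
  | @tail p p' hp hs ih =>
    have hp' : nts p'.1 = G.content p'.2 := Reach.nts_eq (.tail hp hs)
    obtain ⟨t, ht, hsrc, htgt, hrw⟩ := hs
    have hen : G.Enables p.2 (some ⟨t, ht⟩) := by
      rintro _ ⟨⟩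
      exact hsrc
    refine (ih hen).tail ⟨pstep_toPG_iff.2 ?_, ?_⟩
    · rw [← htgt] at ha
      simp only [Equiv.symm_apply_apply]
      exact ⟨hrw, ha⟩
    · rw [← card_nts, hp']
      exact hcard _

theorem exists_pg [Finite Q] (G : TrackingGrammar ℕ Q T) :
    ∃ P : PG T, P.lang = G.lang ∧ (∃ m, 1 ≤ m ∧ P.lang ⊆ P.langB m) ∧
      ((∀ t ∈ G.trans, t.rhs ≠ []) → P.LamFree) := by
  have := G.finite_trans.to_subtype
  obtain ⟨n, ⟨e⟩⟩ := Finite.exists_equiv_fin (Option G.trans)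
  obtain ⟨S, hS⟩ := ((G.finite_trans.image Transition.lhs).union
    (Set.finite_iUnion fun q => (G.content q).toFinset.finite_toSet)).exists_notMem
  simp only [Set.mem_union, Set.mem_image, Set.mem_iUnion, Finset.mem_coe, Multiset.mem_toFinset,
    not_or, not_exists, not_and] at hS
  obtain ⟨m, hm⟩ := (Set.finite_range fun q => (G.content q).card).bddAbove
  have hcard (q : Q) : (G.content q).card ≤ max 1 m := le_max_of_le_right (hm ⟨q, rfl⟩)
  have hsound : (G.toPG S e).lang ⊆ G.lang := by
    rintro w ⟨i, j, h⟩
    rcases exists_reach_of_toPG hS.1 hS.2 h with hw | ⟨q, hq, -⟩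
    · simpa using congrArg nts hw
    · exact ⟨q, hq⟩
  have hcomplete : G.lang ⊆ (G.toPG S e).langB (max 1 m) := by
    rintro w ⟨q, hq⟩
    exact ⟨e none, e none, le_max_left 1 m,
      hq.reflTransGen_toPG (le_max_left 1 m) hcard (by rintro _ ⟨⟩)⟩
  refine ⟨G.toPG S e, hsound.antisymm (hcomplete.trans (PG.langB_subset_lang _ _)),
    ⟨max 1 m, le_max_left 1 m, hsound.trans hcomplete⟩, fun hG i => ?_⟩
  change (G.labelRule S (e.symm i)).2 ≠ []
  cases e.symm i with
  | none => exact List.cons_ne_nil _ _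
  | some t => exact hG t.1 t.2

end TrackingGrammar

end ToPG

/-! ### From programmed grammars to tracking grammars -/

section FromPG

lemma finite_relabel_eq {N M T : Type*} [Finite N] (φ : N → M) (z : List (M ⊕ T)) :
    {x : List (N ⊕ T) | relabel φ x = z}.Finite := by
  induction z with
  | nil => exact (Set.finite_singleton []).subset fun x hx => relabel_eq_nil.1 hx
  | cons s z ih =>
    have hs : {a : N ⊕ T | Sum.map φ id a = s}.Finite := by
      cases s with
      | inl A =>
        refine (Set.finite_range Sum.inl).subset ?_
        rintro (B | b) h
        · exact ⟨B, rfl⟩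
        · cases h
      | inr a =>
        refine (Set.finite_singleton (Sum.inr a)).subset ?_
        rintro (B | b) h
        · cases h
        · simpa using h
    refine (hs.image2 List.cons ih).subset fun x hx => ?_
    obtain ⟨a, y, rfl, ha, hy⟩ := List.map_eq_cons_iff.1 hx
    exact ⟨a, ha, y, hy, rfl⟩

section Copies

variable {M T : Type*} {K : Finset M} {m : ℕ}

/-- The nonterminal of which `A` is one of the `m` copies. -/
def name (A : K × Fin m) : M := A.1

lemma exists_copy_notMem {c : Finset (K × Fin m)} (hc : c.card < m) {A : M} (hA : A ∈ K) :
    ∃ B, name B = A ∧ B ∉ c := by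
  have : (c.image Prod.snd).card < (Finset.univ : Finset (Fin m)).card := by
    simpa using Finset.card_image_le.trans_lt hc
  obtain ⟨i, -, hi⟩ := Finset.exists_mem_notMem_of_card_lt_card this
  exact ⟨(⟨A, hA⟩, i), rfl, fun h => hi (Finset.mem_image_of_mem _ h)⟩

lemma exists_relabel_name_eq {z : List (M ⊕ T)} (hz : ∀ A ∈ nts z, A ∈ K) (c : Finset (K × Fin m))
    (hc : c.card + (nts z).card ≤ m) : ∃ x, relabel name x = z ∧ (c.val + nts x).Nodup := by
  classical
  induction z generalizing c with
  | nil => exact ⟨[], rfl, by simpa using c.nodup⟩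
  | cons s z ih =>
    cases s with
    | inr a =>
      obtain ⟨x, rfl, hx⟩ := ih hz c hc
      exact ⟨Sum.inr a :: x, rfl, hx⟩
    | inl A =>
      simp only [nts_cons_inl, Multiset.mem_cons, forall_eq_or_imp, Multiset.card_cons] at hz hc
      obtain ⟨B, rfl, hB⟩ := exists_copy_notMem (show c.card < m by lia) hz.1
      obtain ⟨x, rfl, hx⟩ := ih hz.2 (insert B c) (by rw [Finset.card_insert_of_notMem hB]; lia)
      refine ⟨Sum.inl B :: x, rfl, ?_⟩
      rw [Finset.insert_val_of_notMem hB] at hx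
      simpa using hx

end Copies

namespace PG

variable {T : Type} (P : PG T) (m : ℕ)

/-- The start symbol together with the nonterminals of all right-hand sides. -/
def nonterminals : Finset ℕ :=
  insert P.start (Finset.univ.biUnion fun r => (nts (P.rule r).2).toFinset)

lemma start_mem_nonterminals : P.start ∈ P.nonterminals := Finset.mem_insert_self _ _

variable {P} in
lemma mem_nonterminals {r : Fin P.nLab} {A : ℕ} (hA : A ∈ nts (P.rule r).2) :
    A ∈ P.nonterminals :=
  Finset.mem_insert_of_mem <| Finset.mem_biUnion.2
    ⟨r, Finset.mem_univ r, Multiset.mem_toFinset.2 hA⟩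

/-- The copies of the nonterminals of `P` which distinguish the occurrences in a sentential form
with at most `m` nonterminals. -/
abbrev Copies : Type := P.nonterminals × Fin m

/-- The control of the tracking grammar of `P`: the copies in the sentential form and the current
label, which is `none` before the initial label has been chosen. -/
abbrev CopyControl : Type := Finset (P.Copies m) × Option (Fin P.nLab)

/-- The transitions of the tracking grammar of `P`. Those that only change the label rewrite some
copy by itself. -/
inductive IsTransition : Transition (P.Copies m) (P.CopyControl m) T → Prop
  | choose (c A r) : IsTransition ⟨(c, none), A, [Sum.inl A], (c, some r)⟩
  | apply {c c' r r' A z} (hA : name A = (P.rule r).1) (hz : relabel name z = (P.rule r).2)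
      (hsucc : r' ∈ P.succ r) (hc : c'.val + {A} = c.val + nts z) :
      IsTransition ⟨(c, some r), A, z, (c', some r')⟩
  | skip {c r r'} (A) (hc : ∀ B ∈ c, name B ≠ (P.rule r).1) (hfail : r' ∈ P.fail r) :
      IsTransition ⟨(c, some r), A, [Sum.inl A], (c, some r')⟩

variable {m}

/-- The tracking grammar that simulates the derivations of `P` of index at most `m`. -/
def tracking (hm : 1 ≤ m) : TrackingGrammar (P.Copies m) (P.CopyControl m) T where
  start := (⟨P.start, P.start_mem_nonterminals⟩, ⟨0, hm⟩)
  init := ({(⟨P.start, P.start_mem_nonterminals⟩, ⟨0, hm⟩)}, none)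
  content q := q.1.val
  trans := {t | P.IsTransition m t}
  finite_trans := by
    refine (finite_transitions ((Set.finite_range fun A => (A, [Sum.inl A])).union
      (Set.finite_univ.prod (Set.finite_iUnion fun r =>
        finite_relabel_eq name (P.rule r).2)))).subset ?_
    rintro _ (_ | ⟨-, hz⟩ | _)
    · exact .inl ⟨_, rfl⟩
    · exact .inr ⟨trivial, Set.mem_iUnion.2 ⟨_, hz⟩⟩
    · exact .inl ⟨_, rfl⟩
  content_init := rfl
  balance := by
    rintro _ (_ | ⟨-, -, -, hc⟩ | _)
    · rfl
    · exact hc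
    · rfl

variable {P} {hm : 1 ≤ m}

lemma pstep_of_rewrites {r r' : Fin P.nLab} {x y : SForm T}
    (h : Rewrites (P.rule r).1 (P.rule r).2 x y) (hr' : r' ∈ P.succ r) :
    P.PStep (x, r) (y, r') := by
  obtain ⟨u, v, hx, hy⟩ := h
  exact .inl ⟨u, v, hx, hy, hr'⟩

lemma reflTransGen_pstep_of_reach {p : List (P.Copies m ⊕ T) × P.CopyControl m}
    (h : (P.tracking hm).Reach p) :
    (p.2.2 = none → relabel name p.1 = [Sum.inl P.start]) ∧ ∀ r, p.2.2 = some r →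
      ∃ r₁, Relation.ReflTransGen P.PStep ([Sum.inl P.start], r₁) (relabel name p.1, r) := by
  induction h with
  | refl => exact ⟨fun _ => rfl, nofun⟩
  | @tail p p' hp hs ih =>
    obtain ⟨X, q⟩ := p
    obtain ⟨Y, q'⟩ := p'
    have hX : nts X = q.1.val := TrackingGrammar.Reach.nts_eq hp
    obtain ⟨_, ht, rfl, rfl, hrw⟩ := hs
    cases ht with
    | choose c A r =>
      obtain ⟨-, rfl⟩ := rewrites_singleton.1 hrw
      refine ⟨nofun, ?_⟩
      rintro _ ⟨⟩
      exact ⟨r, by rw [ih.1 rfl]⟩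
    | @apply c c' r r' A z hA hz hsucc hc =>
      refine ⟨nofun, ?_⟩
      rintro _ ⟨⟩
      obtain ⟨r₁, hr₁⟩ := ih.2 r rfl
      exact ⟨r₁, hr₁.tail (pstep_of_rewrites (hA ▸ hz ▸ hrw.relabel name) hsucc)⟩
    | @skip c r r' A hc hfail =>
      obtain ⟨-, rfl⟩ := rewrites_singleton.1 hrw
      refine ⟨nofun, ?_⟩
      rintro _ ⟨⟩
      obtain ⟨r₁, hr₁⟩ := ih.2 r rfl
      refine ⟨r₁, hr₁.tail (.inr ⟨fun hmem => ?_, rfl, hfail⟩)⟩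
      rw [← mem_nts, nts_relabel, hX] at hmem
      obtain ⟨B, hB, hBr⟩ := Multiset.mem_map.1 hmem
      exact hc B hB hBr

lemma exists_reach_apply {X : List (P.Copies m ⊕ T)} {c : Finset (P.Copies m)} {r r' : Fin P.nLab}
    (hX : (P.tracking hm).Reach (X, c, some r)) {y : SForm T}
    (hrw : Rewrites (P.rule r).1 (P.rule r).2 (relabel name X) y) (hsucc : r' ∈ P.succ r)
    (hy : ntCount y ≤ m) :
    ∃ Y c', (P.tracking hm).Reach (Y, c', some r') ∧ relabel name Y = y := by
  classical
  have hXc : nts X = c.val := hX.nts_eq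
  obtain ⟨B, hBX, hB, hlift⟩ := hrw.of_relabel
  have hBc : B ∈ c := Finset.mem_def.2 (hXc ▸ hBX)
  have hcard : (c.erase B).card + (nts (P.rule r).2).card ≤ m := by
    have := congrArg Multiset.card hrw.nts_add
    simp only [Multiset.card_add, Multiset.card_singleton, nts_relabel, Multiset.card_map, hXc,
      Finset.card_val, card_nts] at this
    have := Finset.card_erase_add_one hBc
    rw [card_nts]
    lia
  obtain ⟨z, hz, hnodup⟩ := exists_relabel_name_eq (fun _ => mem_nonterminals) (c.erase B) hcard
  obtain ⟨Y, hY, rfl⟩ := hlift z hz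
  refine ⟨Y, ⟨_, hnodup⟩, hX.tail ⟨⟨_, B, z, _⟩, .apply hB hz hsucc ?_, rfl, rfl, hY⟩, rfl⟩
  rw [add_right_comm, Finset.erase_val, add_comm (Multiset.erase _ _), Multiset.singleton_add,
    Multiset.cons_erase hBc]

lemma reach_skip {X : List (P.Copies m ⊕ T)} {c : Finset (P.Copies m)} {r r' : Fin P.nLab}
    (hX : (P.tracking hm).Reach (X, c, some r)) (hX₀ : nts X ≠ 0)
    (hr : (P.rule r).1 ∉ nts (relabel name X)) (hfail : r' ∈ P.fail r) :
    (P.tracking hm).Reach (X, c, some r') := by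
  have hXc : nts X = c.val := hX.nts_eq
  obtain ⟨B, hB⟩ := Multiset.exists_mem_of_ne_zero hX₀
  refine hX.tail
    ⟨_, .skip B (fun C hC hCr => hr ?_) hfail, rfl, rfl, rewrites_singleton.2 ⟨hB, rfl⟩⟩
  rw [nts_relabel, hXc, ← hCr]
  exact Multiset.mem_map_of_mem _ hC

lemma exists_reach_of_reflTransGen_pstep {r₁ : Fin P.nLab} {p : SForm T × Fin P.nLab}
    (h : Relation.ReflTransGen (fun p q => P.PStep p q ∧ ntCount q.1 ≤ m)
      ([Sum.inl P.start], r₁) p) :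
    ∃ X c o, (P.tracking hm).Reach (X, c, o) ∧ relabel name X = p.1 ∧
      (nts X ≠ 0 → o = some p.2) := by
  induction h with
  | refl =>
    exact ⟨_, _, some r₁, .single ⟨_, .choose _ _ r₁, rfl, rfl, rewrites_self.2 rfl⟩, rfl,
      fun _ => rfl⟩
  | @tail p p' _ hs ih =>
    obtain ⟨X, c, o, hX, hXp, ho⟩ := ih
    obtain ⟨x, r⟩ := p
    obtain ⟨y, r'⟩ := p'
    obtain rfl : relabel name X = x := hXp
    obtain ⟨⟨u, v, hx, hy, hsucc⟩ | ⟨hr, rfl, hfail⟩, hcard⟩ := hs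
    · have hrw : Rewrites (P.rule r).1 (P.rule r).2 (relabel name X) y := ⟨u, v, hx, hy⟩
      have hX₀ : nts X ≠ 0 := fun h => by simpa [h] using hrw.mem
      obtain rfl := ho hX₀
      obtain ⟨Y, c', hY, hYy⟩ := exists_reach_apply hX hrw hsucc hcard
      exact ⟨Y, c', some r', hY, hYy, fun _ => rfl⟩
    · by_cases hX₀ : nts X = 0
      · exact ⟨X, c, o, hX, rfl, fun h => (h hX₀).elim⟩
      · obtain rfl := ho hX₀
        exact ⟨X, c, some r', reach_skip hX hX₀ (mem_nts.not.2 hr) hfail, rfl, fun _ => rfl⟩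

lemma lang_tracking (hm : 1 ≤ m) (hP : P.lang ⊆ P.langB m) : (P.tracking hm).lang = P.lang := by
  ext w
  constructor
  · rintro ⟨⟨c, o⟩, hq⟩
    obtain ⟨hnone, hsome⟩ := reflTransGen_pstep_of_reach hq
    rw [relabel_map_inr] at hnone hsome
    cases o with
    | none => simpa using congrArg nts (hnone rfl)
    | some r =>
      obtain ⟨r₁, hr₁⟩ := hsome r rfl
      exact ⟨r₁, r, hr₁⟩
  · intro hw
    obtain ⟨r₁, r₂, -, h⟩ := hP hw
    obtain ⟨X, c, o, hX, hXw, -⟩ := exists_reach_of_reflTransGen_pstep (hm := hm) h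
    rw [relabel_eq_map_inr.1 hXw] at hX
    exact ⟨(c, o), hX⟩

lemma rhs_ne_nil_of_mem_tracking (hP : P.LamFree) : ∀ t ∈ (P.tracking hm).trans, t.rhs ≠ [] := by
  rintro _ (_ | @⟨_, _, r, _, _, _, -, hz⟩ | _)
  · exact List.cons_ne_nil _ _
  · rintro rfl
    exact hP r hz.symm
  · exact List.cons_ne_nil _ _

end PG

end FromPG

/-! ### Guarded rules as components of CD grammar systems -/

section Guarded

/-- A context-free rule over the nonterminals `M` that may only be applied if it leaves a form all
of whose nonterminals are `allowed`. The left-hand side is not allowed, so that at most one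
occurrence of it can be rewritten. -/
structure GuardedRule (M T : Type*) where
  lhs : M
  rhs : List (M ⊕ T)
  allowed : Set M
  lhs_notMem : lhs ∉ allowed
  rhs_allowed : ∀ s ∈ nts rhs, s ∈ allowed

section Basic

variable {M T : Type*}

/-- One application of a guarded rule. -/
def GuardedRule.Fires (κ : GuardedRule M T) (x y : List (M ⊕ T)) : Prop :=
  Rewrites κ.lhs κ.rhs x y ∧ ∀ s ∈ nts y, s ∈ κ.allowed

/-- One application of some guarded rule from `R`. -/
def GuardedStep (R : Set (GuardedRule M T)) (x y : List (M ⊕ T)) : Prop := ∃ κ ∈ R, κ.Fires x y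

end Basic

variable {M : Type*} [Finite M] {T : Type} (enc : M ↪ ℕ)

namespace GuardedRule

variable (κ : GuardedRule M T)

/-- The component simulating `κ`. By its rules `s → s` it cannot terminate as long as a nonterminal
that is not allowed is present, and since these include `lhs → lhs`, it can make any positive
number of steps before it terminates. -/
noncomputable def component : List (Rule T) :=
  (enc κ.lhs, relabel enc κ.rhs) ::
    κ.allowedᶜ.toFinite.toFinset.toList.map fun s => (enc s, [Sum.inl (enc s)])

variable {enc κ}

lemma mem_component {r : Rule T} :
    r ∈ κ.component enc ↔ r = (enc κ.lhs, relabel enc κ.rhs) ∨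
      ∃ s ∉ κ.allowed, r = (enc s, [Sum.inl (enc s)]) := by
  simp [component, eq_comm]

lemma component_terminated_iff {x : List (M ⊕ T)} :
    (∀ r ∈ κ.component enc, r.1 ∉ nts (relabel enc x)) ↔ ∀ s ∈ nts x, s ∈ κ.allowed := by
  have mem_iff (s : M) : enc s ∈ nts (relabel enc x) ↔ s ∈ nts x := by
    rw [nts_relabel, Multiset.mem_map_of_injective enc.injective]
  constructor
  · intro h s hs
    by_contra hsκ
    exact h _ (mem_component.2 (.inr ⟨s, hsκ, rfl⟩)) ((mem_iff s).2 hs)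
  · intro h r hr hrx
    rcases mem_component.1 hr with rfl | ⟨s, hsκ, rfl⟩
    · exact κ.lhs_notMem (h _ ((mem_iff _).1 hrx))
    · exact hsκ (h s ((mem_iff s).1 hrx))

lemma rstep_component_iff {x : List (M ⊕ T)} {y : SForm T} :
    RStep (κ.component enc) (relabel enc x) y ↔
      (∃ x', Rewrites κ.lhs κ.rhs x x' ∧ relabel enc x' = y) ∨
        (∃ s ∈ nts x, s ∉ κ.allowed) ∧ y = relabel enc x := by
  constructor
  · rintro ⟨r, hr, hrw⟩
    rcases mem_component.1 hr with rfl | ⟨s, hsκ, rfl⟩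
    · obtain ⟨A, -, hA, hlift⟩ := Rewrites.of_relabel hrw
      obtain rfl := enc.injective hA
      exact .inl (hlift _ rfl)
    · obtain ⟨hs, rfl⟩ := rewrites_singleton.1 hrw
      rw [nts_relabel, Multiset.mem_map_of_injective enc.injective] at hs
      exact .inr ⟨⟨s, hs, hsκ⟩, rfl⟩
  · rintro (⟨x', hrw, rfl⟩ | ⟨⟨s, hs, hsκ⟩, rfl⟩)
    · exact ⟨_, mem_component.2 (.inl rfl), hrw.relabel enc⟩
    · refine ⟨_, mem_component.2 (.inr ⟨s, hsκ, rfl⟩), rewrites_singleton.2 ⟨?_, rfl⟩⟩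
      rw [nts_relabel]
      exact Multiset.mem_map_of_mem enc hs

lemma eq_of_stepsN_component {x : List (M ⊕ T)} (hx : κ.lhs ∉ nts x) {m : ℕ} {y : SForm T}
    (h : StepsN (κ.component enc) m (relabel enc x) y) : y = relabel enc x := by
  induction m with
  | zero => exact h.symm
  | succ m ih =>
    obtain ⟨z, hz, h⟩ := h
    rcases rstep_component_iff.1 hz with ⟨x', hrw, -⟩ | ⟨-, rfl⟩
    · exact (hx hrw.mem).elim
    · exact ih h

lemma eq_or_rewrites_of_stepsN_component {x : List (M ⊕ T)} (hx : (nts x).Nodup) {m : ℕ}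
    {y : SForm T} (h : StepsN (κ.component enc) m (relabel enc x) y) :
    y = relabel enc x ∨ ∃ x', Rewrites κ.lhs κ.rhs x x' ∧ y = relabel enc x' := by
  induction m with
  | zero => exact .inl h.symm
  | succ m ih =>
    obtain ⟨z, hz, h⟩ := h
    rcases rstep_component_iff.1 hz with ⟨x', hrw, rfl⟩ | ⟨-, rfl⟩
    · have hrhs : κ.lhs ∉ nts κ.rhs := fun h => κ.lhs_notMem (κ.rhs_allowed _ h)
      exact .inr ⟨x', hrw, eq_of_stepsN_component (hrw.notMem hx hrhs) h⟩
    · exact ih h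

lemma Fires.stepsN {x y : List (M ⊕ T)} (h : κ.Fires x y) (m : ℕ) :
    StepsN (κ.component enc) (m + 1) (relabel enc x) (relabel enc y) := by
  induction m with
  | zero => exact ⟨_, rstep_component_iff.2 (.inl ⟨y, h.1, rfl⟩), rfl⟩
  | succ m ih => exact ⟨_, rstep_component_iff.2 (.inr ⟨⟨_, h.1.mem, κ.lhs_notMem⟩, rfl⟩), ih⟩

end GuardedRule

/-- The CD grammar system whose components simulate the guarded rules `κ i`. -/
noncomputable def guardedCDGS (s : M) {n : ℕ} (κ : Fin n → GuardedRule M T) : CDGS T where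
  deg := n
  start := enc s
  comp i := (κ i).component enc

variable {enc} {s : M} {n : ℕ} {κ : Fin n → GuardedRule M T} {f : Mode} {D : Set ℕ} {l : ℕ}

lemma GuardedStep.modeStep (hf : f.Counts D) (hlD : l ∈ D) (hl : 1 ≤ l) {x y : List (M ⊕ T)}
    (h : GuardedStep (Set.range κ) x y) :
    (guardedCDGS enc s κ).ModeStep (.conj .t f) (relabel enc x) (relabel enc y) := by
  obtain ⟨_, ⟨i, rfl⟩, h⟩ := h
  obtain ⟨m, rfl⟩ := Nat.exists_eq_add_of_le' hl
  exact ⟨i, m + 1, h.stepsN m,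
    (modeOK_conj_t_iff hf).2 ⟨GuardedRule.component_terminated_iff.2 h.2, hlD⟩⟩

lemma eq_or_guardedStep_of_modeStep (hf : f.Counts D) {x : List (M ⊕ T)} (hx : (nts x).Nodup)
    {y : SForm T} (h : (guardedCDGS enc s κ).ModeStep (.conj .t f) (relabel enc x) y) :
    y = relabel enc x ∨ ∃ x', GuardedStep (Set.range κ) x x' ∧ y = relabel enc x' := by
  obtain ⟨i, m, hsteps, hok⟩ := h
  refine (GuardedRule.eq_or_rewrites_of_stepsN_component hx hsteps).imp_right ?_
  rintro ⟨x', hrw, rfl⟩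
  have hterm := ((modeOK_conj_t_iff hf).1 hok).1
  exact ⟨x', ⟨κ i, ⟨i, rfl⟩, hrw, GuardedRule.component_terminated_iff.1 hterm⟩, rfl⟩

lemma exists_reflTransGen_guardedStep (hf : f.Counts D)
    (hnodup : ∀ x, Relation.ReflTransGen (GuardedStep (Set.range κ)) [Sum.inl s] x → (nts x).Nodup)
    {y : SForm T}
    (h : Relation.ReflTransGen ((guardedCDGS enc s κ).ModeStep (.conj .t f)) [Sum.inl (enc s)] y) :
    ∃ x, Relation.ReflTransGen (GuardedStep (Set.range κ)) [Sum.inl s] x ∧ y = relabel enc x := by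
  induction h with
  | refl => exact ⟨_, .refl, rfl⟩
  | tail _ hs ih =>
    obtain ⟨x, hx, rfl⟩ := ih
    rcases eq_or_guardedStep_of_modeStep hf (hnodup x hx) hs with rfl | ⟨x', hx', rfl⟩
    · exact ⟨x, hx, rfl⟩
    · exact ⟨x', hx.tail hx', rfl⟩

theorem lang_guardedCDGS (hf : f.Counts D) (hlD : l ∈ D) (hl : 1 ≤ l)
    (hnodup : ∀ x, Relation.ReflTransGen (GuardedStep (Set.range κ)) [Sum.inl s] x →
      (nts x).Nodup) :
    (guardedCDGS enc s κ).lang (.conj .t f) =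
      {w | Relation.ReflTransGen (GuardedStep (Set.range κ)) [Sum.inl s] (w.map Sum.inr)} := by
  ext w
  rw [CDGS.lang_eq]
  constructor
  · intro hw
    obtain ⟨x, hx, hxw⟩ := exists_reflTransGen_guardedStep hf hnodup hw
    rwa [relabel_eq_map_inr.1 hxw.symm] at hx
  · intro hw
    have hlift := Relation.ReflTransGen.lift (relabel enc)
      (fun _ _ => GuardedStep.modeStep (enc := enc) (s := s) hf hlD hl) _ _ hw
    rwa [Function.onFun, relabel_map_inr] at hlift

lemma guardedCDGS_lamFree (h : ∀ i, (κ i).rhs ≠ []) : (guardedCDGS enc s κ).LamFree := by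
  intro i r hr
  rcases GuardedRule.mem_component.1 hr with rfl | ⟨s, -, rfl⟩
  · exact relabel_eq_nil.not.2 (h i)
  · exact List.cons_ne_nil _ _

end Guarded

/-! ### From tracking grammars to CD grammar systems -/

section Tokens

/-- The marks carried by nonterminals: at most one occurrence holds the control state (`active`);
while control is being passed on, another one announces the next state (`pending`). -/
inductive Mark (Q : Type*)
  | plain
  | active (q : Q)
  | pending (q : Q)

instance {Q : Type*} [Finite Q] : Finite (Mark Q) :=
  Finite.of_surjective (Sum.elim (fun _ : Unit => Mark.plain) (Sum.elim .active .pending)) <| by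
    rintro (_ | q | q)
    exacts [⟨.inl (), rfl⟩, ⟨.inr (.inl q), rfl⟩, ⟨.inr (.inr q), rfl⟩]

variable {N Q T : Type*}

/-- The sentential form `x` with every nonterminal `A` carrying the mark `g A`. -/
def mark (g : N → Mark Q) (x : List (N ⊕ T)) : List ((N × Mark Q) ⊕ T) :=
  relabel (fun A => (A, g A)) x

lemma mem_nts_mark {g : N → Mark Q} {x : List (N ⊕ T)} {s : N × Mark Q} :
    s ∈ nts (mark g x) ↔ s.1 ∈ nts x ∧ s.2 = g s.1 := by
  obtain ⟨A, o⟩ := s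
  simp only [mark, nts_relabel, Multiset.mem_map, Prod.mk.injEq]
  constructor
  · rintro ⟨_, hA, rfl, rfl⟩
    exact ⟨hA, rfl⟩
  · rintro ⟨hA, rfl⟩
    exact ⟨A, hA, rfl, rfl⟩

lemma nodup_nts_mark {g : N → Mark Q} {x : List (N ⊕ T)} (hx : (nts x).Nodup) :
    (nts (mark g x)).Nodup := by
  rw [mark, nts_relabel]
  exact hx.map fun _ _ h => congrArg Prod.fst h

lemma mark_congr {g g' : N → Mark Q} {x : List (N ⊕ T)} (h : ∀ A ∈ nts x, g A = g' A) :
    mark g x = mark g' x :=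
  relabel_congr fun A hA => by rw [h A hA]

/-- The guarded rule replacing `B`, marked `o`, by `z` and leaving a form marked by `g`. -/
def markRule (B : N) (o : Mark Q) (z : List (N ⊕ T)) (g : N → Mark Q) (h : o ≠ g B) :
    GuardedRule (N × Mark Q) T where
  lhs := (B, o)
  rhs := mark g z
  allowed := {s | s.2 = g s.1}
  lhs_notMem := h
  rhs_allowed _ hs := (mem_nts_mark.1 hs).2

variable {B : N} {o : Mark Q} {x z : List (N ⊕ T)} {g g' : N → Mark Q} {h : o ≠ g' B}

lemma exists_of_fires_markRule {y : List ((N × Mark Q) ⊕ T)}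
    (hy : (markRule B o z g' h).Fires (mark g x) y) :
    g B = o ∧ (∀ A ∈ nts x, A ≠ B → g A = g' A) ∧ ∃ x', Rewrites B z x x' ∧ y = mark g' x' := by
  obtain ⟨hrw, hall⟩ := hy
  obtain ⟨u, A, v, rfl, hA, rfl⟩ := hrw.exists_of_relabel
  obtain ⟨rfl, ho⟩ := Prod.ext_iff.1 hA
  have hu : ∀ C ∈ nts u, g C = g' C := fun C hC => hall (C, g C) (by simp [hC])
  have hv : ∀ C ∈ nts v, g C = g' C := fun C hC => hall (C, g C) (by simp [hC])
  refine ⟨ho, fun C hC hne => ?_, u ++ z ++ v, ⟨u, v, rfl, rfl⟩, ?_⟩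
  · simp only [nts_append, nts_cons_inl, Multiset.mem_add, Multiset.mem_cons] at hC
    rcases hC with hC | rfl | hC
    exacts [hu C hC, (hne rfl).elim, hv C hC]
  · change mark g u ++ mark g' z ++ mark g v = _
    rw [mark_congr hu, mark_congr hv]
    simp only [mark, relabel_append]

lemma fires_markRule (hx : (nts x).Nodup) (ho : g B = o)
    (hg : ∀ A ∈ nts x, A ≠ B → g A = g' A) {x' : List (N ⊕ T)} (hrw : Rewrites B z x x') :
    (markRule B o z g' h).Fires (mark g x) (mark g' x') := by
  refine ⟨?_, fun s hs => (mem_nts_mark.1 hs).2⟩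
  obtain ⟨u, v, rfl, rfl⟩ := hrw
  simp only [nts_append, nts_cons_inl, Multiset.nodup_add, Multiset.nodup_cons,
    Multiset.disjoint_cons_right] at hx
  have hu : mark g u = mark g' u := mark_congr fun C hC =>
    hg C (by simp [hC]) (by rintro rfl; exact hx.2.2.1 hC)
  have hv : mark g v = mark g' v := mark_congr fun C hC =>
    hg C (by simp [hC]) (by rintro rfl; exact hx.2.1.1 hC)
  refine ⟨mark g u, mark g v, ?_, ?_⟩
  · simp [markRule, mark, ho]
  · rw [hu, hv]
    simp only [markRule, mark, relabel_append]

section Markings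

variable [DecidableEq N]

/-- The marking with mark `o` at `A` and no other mark. -/
def single (A : N) (o : Mark Q) : N → Mark Q := Function.update (fun _ => .plain) A o

/-- The marking in which `A`, holding the state `q`, is about to pass control to `A'`, which
announces the next state `q'`. -/
def handover (A : N) (q : Q) (A' : N) (q' : Q) : N → Mark Q :=
  Function.update (single A' (.pending q')) A (.active q)

lemma single_apply (A : N) (o : Mark Q) (B : N) : single A o B = if B = A then o else .plain :=
  Function.update_apply ..

lemma handover_apply (A : N) (q : Q) (A' : N) (q' : Q) (B : N) :
    handover A q A' q' B =
      if B = A then .active q else if B = A' then .pending q' else .plain := by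
  rw [handover, Function.update_apply, single_apply]

/-- While `A` holds the state `q`, the nonterminal `A'` announces `q'` as the next state. -/
def announceRule (A : N) (q : Q) (A' : N) (q' : Q) : GuardedRule (N × Mark Q) T :=
  markRule A' .plain [Sum.inl A'] (handover A q A' q') <| by
    rw [handover_apply]
    split_ifs <;> simp_all

/-- The transition `t`, applied to the holder of its source state; its target state is left
announced at `A'`. -/
def transitionRule (t : Transition N Q T) (A' : N) : GuardedRule (N × Mark Q) T :=
  markRule t.lhs (.active t.src) t.rhs (single A' (.pending t.tgt)) <| by
    rw [single_apply]
    split_ifs <;> simp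

/-- The nonterminal `A` announcing the state `q` becomes its holder. -/
def acceptRule (A : N) (q : Q) : GuardedRule (N × Mark Q) T :=
  markRule A (.pending q) [Sum.inl A] (single A (.active q)) <| by
    simp [single_apply]

namespace TrackingGrammar

variable (G : TrackingGrammar N Q T)

/-- The guarded rules simulating `G`. Control is handed from `A` in state `q` to `A'` in state `q'`
by announcing, applying a transition and accepting; a component applied at the wrong moment meets
a mark that is not allowed. When a transition leaves no nonterminal, there is no one to announce
its target state and the choice of `A'` is immaterial. -/
def tokenRules : Set (GuardedRule (N × Mark Q) T) :=
  (Set.range fun p : (N × Q) × N × Q => announceRule p.1.1 p.1.2 p.2.1 p.2.2) ∪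
    (fun p : Transition N Q T × N => transitionRule p.1 p.2) ''
      {p | p.1 ∈ G.trans ∧ (G.content p.1.tgt ≠ 0 → p.2 ∈ G.content p.1.tgt)} ∪
    Set.range fun p : N × Q => acceptRule p.1 p.2

lemma finite_tokenRules [Finite N] [Finite Q] : G.tokenRules.Finite := by
  refine ((Set.finite_range _).union (Set.Finite.image _ ?_)).union (Set.finite_range _)
  exact (G.finite_trans.prod Set.finite_univ).subset fun p hp => ⟨hp.1, trivial⟩

lemma rhs_ne_nil_of_mem_tokenRules (hG : ∀ t ∈ G.trans, t.rhs ≠ [])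
    {κ : GuardedRule (N × Mark Q) T} (hκ : κ ∈ G.tokenRules) : κ.rhs ≠ [] := by
  rcases hκ with (⟨p, rfl⟩ | ⟨p, hp, rfl⟩) | ⟨p, rfl⟩
  exacts [List.cons_ne_nil _ _, relabel_eq_nil.not.2 (hG _ hp.1), List.cons_ne_nil _ _]

/-- The markings of the sentential forms in state `q` that arise from the `tokenRules`. -/
inductive IsMarking (q : Q) : (N → Mark Q) → Prop
  | active {A : N} (hA : A ∈ G.content q) : IsMarking q (single A (.active q))
  | pending {A : N} (hA : G.content q ≠ 0 → A ∈ G.content q) : IsMarking q (single A (.pending q))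
  | handover {A A' : N} (q' : Q) (hA : A ∈ G.content q) (hA' : A' ∈ G.content q) (hne : A ≠ A') :
      IsMarking q (handover A q A' q')

variable {G} {q : Q} {g : N → Mark Q} {x : List (N ⊕ T)} {y : List ((N × Mark Q) ⊕ T)}

lemma IsMarking.announce (hg : G.IsMarking q g) (hx : nts x = G.content q) {A A' : N} {q₁ q' : Q}
    (hy : (announceRule A q₁ A' q').Fires (mark g x) y) :
    ∃ g', G.IsMarking q g' ∧ y = mark g' x := by
  obtain ⟨hA', hrest, x', hrw, rfl⟩ := exists_of_fires_markRule hy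
  obtain ⟨hmem, rfl⟩ := rewrites_singleton.1 hrw
  refine ⟨_, ?_, rfl⟩
  rw [hx] at hmem hrest
  cases hg with
  | @active A₀ hA₀ =>
    have hne : A₀ ≠ A' := by
      rintro rfl
      simp [single_apply] at hA'
    have hholder := hrest A₀ hA₀ hne
    obtain ⟨rfl, rfl⟩ : A₀ = A ∧ q = q₁ := by
      simp only [single_apply, handover_apply] at hholder
      grind
    exact .handover q' hA₀ hmem hne
  | @pending A₀ hA₀ =>
    have hpending := hrest A₀ (hA₀ fun h0 => by simp [h0] at hmem)
    simp only [single_apply, handover_apply] at hpending hA'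
    grind
  | @handover A₀ A₁ _ hA₀ hA₁ hne =>
    have hpending := hrest A₁ hA₁
    simp only [handover_apply] at hpending hA'
    grind

lemma IsMarking.transition (hg : G.IsMarking q g) {t : Transition N Q T} {A' : N}
    (hA' : G.content t.tgt ≠ 0 → A' ∈ G.content t.tgt)
    (hy : (transitionRule t A').Fires (mark g x) y) :
    t.src = q ∧ ∃ x', Rewrites t.lhs t.rhs x x' ∧ ∃ g', G.IsMarking t.tgt g' ∧ y = mark g' x' := by
  obtain ⟨hlhs, -, x', hrw, rfl⟩ := exists_of_fires_markRule hy
  refine ⟨?_, x', hrw, _, .pending hA', rfl⟩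
  cases hg <;> simp only [single_apply, handover_apply] at hlhs <;> grind

lemma IsMarking.accept (hg : G.IsMarking q g) (hx : nts x = G.content q) {A : N} {q₁ : Q}
    (hy : (acceptRule A q₁).Fires (mark g x) y) :
    ∃ g', G.IsMarking q g' ∧ y = mark g' x := by
  obtain ⟨hA, hrest, x', hrw, rfl⟩ := exists_of_fires_markRule hy
  obtain ⟨hmem, rfl⟩ := rewrites_singleton.1 hrw
  rw [hx] at hmem hrest
  obtain rfl : q₁ = q := by
    cases hg with
    | active => simp only [single_apply] at hA; grind
    | pending => simp only [single_apply] at hA; grind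
    | @handover A₀ _ _ hA₀ =>
      have hholder := hrest A₀ hA₀
      simp only [single_apply, handover_apply] at hA hholder
      grind
  exact ⟨_, .active hmem, rfl⟩

lemma exists_marking_of_reflTransGen
    (h : Relation.ReflTransGen (GuardedStep G.tokenRules)
      [Sum.inl (G.start, Mark.active G.init)] y) :
    ∃ x q g, G.Reach (x, q) ∧ G.IsMarking q g ∧ y = mark g x := by
  induction h with
  | refl =>
    refine ⟨_, _, single G.start (.active G.init), .refl, .active (by simp [G.content_init]), ?_⟩
    simp [mark, single_apply]
  | tail _ hs ih =>
    obtain ⟨x, q, g, hreach, hg, rfl⟩ := ih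
    obtain ⟨_, (⟨p, rfl⟩ | ⟨⟨t, A'⟩, ⟨ht, hA'⟩, rfl⟩) | ⟨p, rfl⟩, hfires⟩ := hs
    · obtain ⟨g', hg', rfl⟩ := hg.announce hreach.nts_eq hfires
      exact ⟨x, q, g', hreach, hg', rfl⟩
    · obtain ⟨rfl, x', hrw, g', hg', rfl⟩ := hg.transition hA' hfires
      exact ⟨x', t.tgt, g', hreach.tail ⟨t, ht, rfl, rfl, hrw⟩, hg', rfl⟩
    · obtain ⟨g', hg', rfl⟩ := hg.accept hreach.nts_eq hfires
      exact ⟨x, q, g', hreach, hg', rfl⟩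

lemma guardedStep_announce (hx : (nts x).Nodup) {A A' : N} (hA' : A' ∈ nts x) (hne : A ≠ A')
    (q q' : Q) :
    GuardedStep G.tokenRules (mark (single A (.active q)) x) (mark (handover A q A' q') x) := by
  refine ⟨_, .inl (.inl ⟨((A, q), A', q'), rfl⟩),
    fires_markRule hx ?_ ?_ (rewrites_singleton.2 ⟨hA', rfl⟩)⟩
  · simp [single_apply, hne.symm]
  · intro C _ hC
    simp [single_apply, handover_apply, hC]

lemma guardedStep_transition (hx : (nts x).Nodup) {t : Transition N Q T} (ht : t ∈ G.trans)
    {A' : N} (hA' : G.content t.tgt ≠ 0 → A' ∈ G.content t.tgt) (hlhs : g t.lhs = .active t.src)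
    (hg : ∀ C ∈ nts x, C ≠ t.lhs → g C = single A' (.pending t.tgt) C) {x' : List (N ⊕ T)}
    (hrw : Rewrites t.lhs t.rhs x x') :
    GuardedStep G.tokenRules (mark g x) (mark (single A' (.pending t.tgt)) x') :=
  ⟨_, .inl (.inr ⟨(t, A'), ⟨ht, hA'⟩, rfl⟩), fires_markRule hx hlhs hg hrw⟩

lemma guardedStep_accept (hx : (nts x).Nodup) {A : N} (hA : A ∈ nts x) (q : Q) :
    GuardedStep G.tokenRules (mark (single A (.pending q)) x) (mark (single A (.active q)) x) := by
  refine ⟨_, .inr ⟨(A, q), rfl⟩, fires_markRule hx ?_ ?_ (rewrites_singleton.2 ⟨hA, rfl⟩)⟩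
  · simp [single_apply]
  · intro C _ hC
    simp [single_apply, hC]

lemma reflTransGen_transition (hx : (nts x).Nodup) {t : Transition N Q T} (ht : t ∈ G.trans)
    {A : N} (hA : G.content t.tgt ≠ 0 → A ∈ G.content t.tgt) {x' : List (N ⊕ T)}
    (hrw : Rewrites t.lhs t.rhs x x') :
    Relation.ReflTransGen (GuardedStep G.tokenRules) (mark (single t.lhs (.active t.src)) x)
      (mark (single A (.pending t.tgt)) x') := by
  by_cases hann : A ∈ nts x ∧ t.lhs ≠ A
  · refine .head (guardedStep_announce hx hann.1 hann.2 t.src t.tgt) <| .single <|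
      guardedStep_transition hx ht hA ?_ ?_ hrw
    · simp [handover_apply]
    · intro C _ hC
      simp [single_apply, handover_apply, hC]
  · refine .single (guardedStep_transition hx ht hA ?_ ?_ hrw)
    · simp [single_apply]
    · intro C hC hne
      simp only [single_apply]
      grind

lemma Reach.reflTransGen_tokenRules (hnodup : ∀ q, (G.content q).Nodup)
    {p : List (N ⊕ T) × Q} (h : G.Reach p) {A : N}
    (hA : G.content p.2 ≠ 0 → A ∈ G.content p.2) :
    Relation.ReflTransGen (GuardedStep G.tokenRules)
      [Sum.inl (G.start, Mark.active G.init)] (mark (single A (.active p.2)) p.1) := by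
  induction h generalizing A with
  | refl =>
    obtain rfl : A = G.start := by simpa [G.content_init] using hA
    simp [mark, single_apply, Relation.ReflTransGen.refl]
  | @tail p p' h hs ih =>
    have hp := Reach.nts_eq h
    have hp' := hs.nts_eq hp
    obtain ⟨x, q⟩ := p
    obtain ⟨x', q'⟩ := p'
    obtain ⟨t, ht, rfl, rfl, hrw⟩ := hs
    have hpending := (ih fun _ => hp ▸ hrw.mem).trans <|
      reflTransGen_transition (hp ▸ hnodup _) ht hA hrw
    by_cases h0 : G.content t.tgt = 0
    · rwa [mark_congr (g' := single A (.active t.tgt)) (by simp [hp', h0])] at hpending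
    · exact hpending.tail (guardedStep_accept (hp' ▸ hnodup _) (hp' ▸ hA h0) _)

lemma setOf_reflTransGen_tokenRules (hnodup : ∀ q, (G.content q).Nodup) :
    {w : List T | Relation.ReflTransGen (GuardedStep G.tokenRules)
      [Sum.inl (G.start, Mark.active G.init)] (w.map Sum.inr)} = G.lang := by
  ext w
  constructor
  · intro hw
    obtain ⟨x, q, g, hreach, -, hx⟩ := exists_marking_of_reflTransGen hw
    obtain rfl := relabel_eq_map_inr.1 hx.symm
    exact ⟨q, hreach⟩
  · rintro ⟨q, hreach⟩
    have hzero : G.content q = 0 := by simpa using hreach.nts_eq.symm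
    simpa [mark] using hreach.reflTransGen_tokenRules hnodup (A := G.start) (absurd hzero)

lemma nodup_nts_of_reflTransGen_tokenRules (hnodup : ∀ q, (G.content q).Nodup)
    (h : Relation.ReflTransGen (GuardedStep G.tokenRules)
      [Sum.inl (G.start, Mark.active G.init)] y) : (nts y).Nodup := by
  obtain ⟨x, q, g, hreach, -, rfl⟩ := exists_marking_of_reflTransGen h
  exact nodup_nts_mark (hreach.nts_eq ▸ hnodup q)

end TrackingGrammar

end Markings

theorem TrackingGrammar.exists_cdgs {T : Type} [Finite N] [Finite Q] (G : TrackingGrammar N Q T)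
    (hnodup : ∀ q, (G.content q).Nodup) {f : Mode} {D : Set ℕ} {l : ℕ} (hf : f.Counts D)
    (hlD : l ∈ D) (hl : 1 ≤ l) :
    ∃ C : CDGS T, C.lang (.conj .t f) = G.lang ∧ ((∀ t ∈ G.trans, t.rhs ≠ []) → C.LamFree) := by
  classical
  obtain ⟨n, κ, -, hκ⟩ := G.finite_tokenRules.fin_param
  obtain ⟨enc⟩ : Nonempty (N × Mark Q ↪ ℕ) := nonempty_embedding_nat _
  refine ⟨guardedCDGS enc (G.start, .active G.init) κ, ?_, fun hG => ?_⟩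
  · rw [lang_guardedCDGS hf hlD hl, hκ, setOf_reflTransGen_tokenRules hnodup]
    rw [hκ]
    exact fun _ => nodup_nts_of_reflTransGen_tokenRules hnodup
  · exact guardedCDGS_lamFree fun i => G.rhs_ne_nil_of_mem_tokenRules hG (hκ ▸ ⟨i, rfl⟩)

end Tokens

/-! ### Equality of the families -/

section Main

variable {T : Type} {lf : Bool} {f : Mode}

theorem cdFamInf_conj_t_subset (hf : f.IsBoundedCounting) :
    CDFamInf T lf (.conj .t f) ⊆ PFamFin T lf true := by
  obtain ⟨D, ⟨k, hk⟩, ⟨n, hnD, hn⟩, hf⟩ := hf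
  rintro L ⟨C, hlam, hL⟩
  have hk1 : 1 ≤ k := hn.trans (hk hnD)
  obtain ⟨P, hlang, ⟨m, hm, hind⟩, hP⟩ := (C.tracking D hk1).exists_pg
  rw [← CDGS.lang_tracking hf hk hk1, ← hlang] at hL
  exact ⟨m, hm, P, fun h => hP (CDGS.rhs_ne_nil_of_mem_tracking (hlam h) hk1), nofun, hL, hind⟩

theorem pFamFin_subset (hf : f.IsBoundedCounting) :
    PFamFin T lf true ⊆ CDFamInf T lf (.conj .t f) := by
  obtain ⟨D, -, ⟨n, hnD, hn⟩, hf⟩ := hf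
  rintro L ⟨m, hm, P, hlam, -, hL, hind⟩
  obtain ⟨C, hlang, hC⟩ := (P.tracking hm).exists_cdgs (fun q => q.1.nodup) hf hnD hn
  rw [← PG.lang_tracking hm hind, ← hlang] at hL
  exact ⟨C, fun h => hC (PG.rhs_ne_nil_of_mem_tracking (hlam h)), hL⟩

theorem cdFamInf_conj_t_eq_pFamFin (hf : f.IsBoundedCounting) :
    CDFamInf T lf (.conj .t f) = PFamFin T lf true :=
  (cdFamInf_conj_t_subset hf).antisymm (pFamFin_subset hf)

end Main

theorem stmt14_general (T : Type) (lf : Bool) (l : ℕ) (hl : 1 ≤ l) (d : ℕ → Mode)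
    (hd : ∀ k, 1 ≤ k → (d k).IsBoundedCounting) :
    CDFamInf T lf (Mode.conj Mode.t (d l)) = CDFamInf T lf (Mode.conj Mode.t (d 1)) ∧
    CDFamInf T lf (Mode.conj Mode.t (d 1)) =
      { L | ∃ k : ℕ, 1 ≤ k ∧ L ∈ CDFamInf T lf (Mode.conj Mode.t (d k)) } ∧
    CDFamInf T lf (Mode.conj Mode.t (d l)) = PFamFin T lf true := by
  have hfam (k : ℕ) (hk : 1 ≤ k) : CDFamInf T lf (.conj .t (d k)) = PFamFin T lf true :=
    cdFamInf_conj_t_eq_pFamFin (hd k hk)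
  refine ⟨(hfam l hl).trans (hfam 1 le_rfl).symm, Set.Subset.antisymm ?_ ?_, hfam l hl⟩
  · exact fun L hL => ⟨1, le_rfl, hL⟩
  · rintro L ⟨k, hk, hL⟩
    rwa [hfam 1 le_rfl, ← hfam k hk]

/-- For every ℓ ∈ ℕ (positive) and Δ ∈ {≤, =},
L(CD_∞, CF[−λ], (t∧Δℓ)) = L(CD_∞, CF[−λ], (t∧Δ1))
  = ⋃_{k∈ℕ} L(CD_∞, CF[−λ], (t∧Δk)) = L_fin(P, CF[−λ], ac),
both with and without erasing rules. -/
theorem stmt14 (lf : Bool) (l : ℕ) (hl : 1 ≤ l) (d : ℕ → Mode)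
    (hd : d = Mode.le ∨ d = Mode.eq) :
    CDFamInf ℕ lf (Mode.conj Mode.t (d l)) = CDFamInf ℕ lf (Mode.conj Mode.t (d 1)) ∧
    CDFamInf ℕ lf (Mode.conj Mode.t (d 1)) =
      { L | ∃ k : ℕ, 1 ≤ k ∧ L ∈ CDFamInf ℕ lf (Mode.conj Mode.t (d k)) } ∧
    CDFamInf ℕ lf (Mode.conj Mode.t (d l)) = PFamFin ℕ lf true :=
  stmt14_general ℕ lf l hl d <| by
    rcases hd with rfl | rfl
    exacts [fun _ => isBoundedCounting_le, fun _ => isBoundedCounting_eq]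

end CDHybrid
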